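/- Suppose the pair (𝒫,𝒟) satisfies conditions (T1)–(T3). Then the zero set of the Fourier transform of μ_{𝒫,𝒟} equals 𝒵(μ̂_{𝒫,𝒟}) = (⋃_{i : Φ(i)=2} P_i · (2ℤ+1)/(2d_i)) ∪ (⋃_{j : Φ(j)=3} P_j · (ℤ∖3ℤ)/3) ∪ (⋃_{m : Φ(m)=N_m} P_m · (ℤ∖N_mℤ)/N_m). -/

import Mathlib

open MeasureTheory Filter Finset Real
open scoped ENNReal NNReal

noncomputable section

/-- `P n = p 1 * p 2 * ⋯ * p n`. -/
def Pprod (p : ℕ → ℕ) (n : ℕ) : ℕ := ∏ i ∈ Finset.Icc 1 n, p i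

/-- The uniform probability measure on the finite set `s • E ⊆ ℝ`. -/
def unifD (E : Finset ℕ) (s : ℝ) : Measure ℝ :=
  (E.card : ℝ≥0∞)⁻¹ • ∑ d ∈ E, Measure.dirac (s * (d : ℝ))

/-- The finite convolutions `μ_n = δ_{P₁⁻¹D₁} ∗ ⋯ ∗ δ_{Pₙ⁻¹Dₙ}`. -/
def muN (p : ℕ → ℕ) (D : ℕ → Finset ℕ) : ℕ → Measure ℝ
  | 0 => Measure.dirac 0
  | n + 1 => Measure.conv (muN p D n) (unifD (D (n + 1)) ((Pprod p (n + 1) : ℝ)⁻¹))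

/-- `μ` is the weak limit of the sequence of measures `ν n`. -/
def IsWeakLimit (ν : ℕ → Measure ℝ) (μ : Measure ℝ) : Prop :=
  ∀ f : BoundedContinuousFunction ℝ ℝ,
    Tendsto (fun n => ∫ x, f x ∂ν n) atTop (nhds (∫ x, f x ∂μ))

/-- `μ` is the Moran measure attached to `(p, D)`: the infinite convolution
`δ_{P₁⁻¹D₁} ∗ δ_{P₂⁻¹D₂} ∗ ⋯`, in the sense of weak convergence. -/
def IsMoran (p : ℕ → ℕ) (D : ℕ → Finset ℕ) (μ : Measure ℝ) : Prop :=
  IsProbabilityMeasure μ ∧ IsWeakLimit (muN p D) μ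

/-- The exponentials `e_λ, λ ∈ Λ` are pairwise orthogonal in `L²(μ)`. -/
def IsOrthSet (μ : Measure ℝ) (Λ : Set ℝ) : Prop :=
  ∀ l ∈ Λ, ∀ l' ∈ Λ, l ≠ l' →
    ∫ x : ℝ, Complex.exp (2 * Real.pi * Complex.I * (l - l') * x) ∂μ = 0

/-- `Λ` is a spectrum of `μ`: the exponentials `e_λ, λ ∈ Λ` form an orthonormal
basis of `L²(μ)` (orthonormal + maximal, i.e. complete). -/
def IsSpectrum (μ : Measure ℝ) (Λ : Set ℝ) : Prop :=
  IsOrthSet μ Λ ∧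
  ∀ f : ℝ → ℂ, MemLp f 2 μ →
    (∀ l ∈ Λ, ∫ x : ℝ, f x * Complex.exp (-(2 * Real.pi * Complex.I * l * x)) ∂μ = 0) →
    f =ᵐ[μ] 0

def IsSpectralMeasure (μ : Measure ℝ) : Prop := ∃ Λ : Set ℝ, Λ.Countable ∧ IsSpectrum μ Λ

/-- Condition (T1): `D n = {0,1,…,N-1}` with `3 < N`, `N ∣ p n`, `N < p n`. -/
def T1cond (p : ℕ → ℕ) (D : ℕ → Finset ℕ) (n : ℕ) : Prop :=
  ∃ N : ℕ, 3 < N ∧ N ∣ p n ∧ N < p n ∧ D n = Finset.range N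

/-- Condition (T2) (except for the global sup condition): `D n = {0,a,b}`,
`0 < a < b`, `gcd(a,b) = 1`, `{a,b} ≡ {1,2} (mod 3)`, `3 ∣ p n`. -/
def T2cond (p : ℕ → ℕ) (D : ℕ → Finset ℕ) (n : ℕ) : Prop :=
  ∃ a b : ℕ, 0 < a ∧ a < b ∧ Nat.gcd a b = 1 ∧
    (a % 3 = 1 ∧ b % 3 = 2 ∨ a % 3 = 2 ∧ b % 3 = 1) ∧ 3 ∣ p n ∧
    D n = ({0, a, b} : Finset ℕ)

/-- Condition (T3): `D n = {0,d}` with `0 < d < p n` and `p n / gcd (d, p n)` even.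
(The decomposition `d = 2^l d'` with `d'` odd always exists, with `l` the 2-adic
valuation of `d`.) -/
def T3cond (p : ℕ → ℕ) (D : ℕ → Finset ℕ) (n : ℕ) : Prop :=
  ∃ d : ℕ, 0 < d ∧ d < p n ∧ 2 ∣ p n / Nat.gcd d (p n) ∧ D n = ({0, d} : Finset ℕ)

/-- The pair `(p, D)` satisfies conditions (T1)–(T3), including the requirement
`sup {b n / p n : n of type (T2)} < 2/3`. -/
def SatisfiesT (p : ℕ → ℕ) (D : ℕ → Finset ℕ) : Prop :=
  (∀ n, 1 ≤ n → T1cond p D n ∨ T2cond p D n ∨ T3cond p D n) ∧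
  ∃ c : ℝ, c < 2 / 3 ∧ ∀ n, 1 ≤ n → T2cond p D n → (((D n).sup id : ℕ) : ℝ) / (p n : ℝ) ≤ c

/-- `σ ∈ {-1,1}^ℕ`. -/
def IsSigma (σ : ℕ → ℤ) : Prop := ∀ n, σ n = 1 ∨ σ n = -1

/-- `α` is admissible: `α m ∈ {-⌊N/2⌋, …, N - 1 - ⌊N/2⌋}` where `N = #(D m)`,
for every `m` with `#(D m) = N_m > 3`. -/
def Admissible (D : ℕ → Finset ℕ) (α : ℕ → ℤ) : Prop :=
  ∀ m, 1 ≤ m → 3 < (D m).card →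
    -(((D m).card / 2 : ℕ) : ℤ) ≤ α m ∧
      α m ≤ ((D m).card : ℤ) - 1 - (((D m).card / 2 : ℕ) : ℤ)

/-- The largest element `d n` (resp. `b n`) of `D n`. -/
def bOf (D : ℕ → Finset ℕ) (n : ℕ) : ℕ := (D n).sup id

/-- The middle element `a n` of a digit set `{0, a, b}`. -/
def aOf (D : ℕ → Finset ℕ) (n : ℕ) : ℕ := (((D n).erase 0).erase ((D n).sup id)).sup id

/-- `l n`: the 2-adic valuation of `d n`, i.e. `d n = 2^(l n) * d'` with `d'` odd. -/
def lOf (D : ℕ → Finset ℕ) (n : ℕ) : ℕ := padicValNat 2 ((D n).sup id)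

/-- The finite set `Λ_n^{σ,α}`. -/
def LamN (p : ℕ → ℕ) (D : ℕ → Finset ℕ) (σ α : ℕ → ℤ) (n : ℕ) : Set ℝ :=
  { x | ∃ c : ℕ → ℝ,
      (∀ i, (D i).card = 2 → c i = 0 ∨ c i = (σ i : ℝ) / 2 ^ (1 + lOf D i)) ∧
      (∀ i, (D i).card = 3 → c i = 0 ∨ c i = 1 / 3 ∨ c i = -(1 / 3)) ∧
      (∀ i, 3 < (D i).card → c i = (α i : ℝ) / ((D i).card : ℝ)) ∧
      x = ∑ i ∈ Finset.Icc 1 n, (Pprod p i : ℝ) * c i }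

/-- `Λ^{σ,α} = ⋃_{n ≥ 1} Λ_n^{σ,α}`. -/
def Lam (p : ℕ → ℕ) (D : ℕ → Finset ℕ) (σ α : ℕ → ℤ) : Set ℝ :=
  ⋃ n ∈ Set.Ici 1, LamN p D σ α n

/-- The Fourier transform `μ̂(ξ) = ∫ e^{-2πixξ} dμ(x)`. -/
def FT (μ : Measure ℝ) (ξ : ℝ) : ℂ :=
  ∫ x : ℝ, Complex.exp (-(2 * Real.pi * Complex.I * x * ξ)) ∂μ

/-- The mask polynomial `m_E(t) = (1/#E) ∑_{d ∈ E} e^{2πidt}`. -/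
def mask (E : Finset ℕ) (t : ℝ) : ℂ :=
  (E.card : ℂ)⁻¹ * ∑ d ∈ E, Complex.exp (2 * Real.pi * Complex.I * (d : ℝ) * t)

end

noncomputable section


lemma zs_mask_eq (E : Finset ℕ) (t : ℝ) :
    mask E t = (E.card : ℂ)⁻¹ * ∑ d ∈ E, Complex.exp (2 * Real.pi * Complex.I * t) ^ d := by
  unfold mask
  congr 1
  refine Finset.sum_congr rfl fun d _ => ?_
  rw [← Complex.exp_nat_mul]
  congr 1
  push_cast
  ring

lemma zs_exp_pow_one (t : ℝ) (k : ℕ) :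
    Complex.exp (2 * Real.pi * Complex.I * t) ^ k = 1 ↔ ∃ z : ℤ, (k : ℝ) * t = z := by
  rw [← Complex.exp_nat_mul, Complex.exp_eq_one_iff]
  refine exists_congr fun z => ?_
  have h : (2 * Real.pi * Complex.I : ℂ) ≠ 0 := Complex.two_pi_I_ne_zero
  constructor
  · intro hz
    have : ((k : ℂ) * t) = z := by
      apply mul_right_cancel₀ h
      rw [← hz]; ring
    exact_mod_cast this
  · intro hz
    have : ((k : ℂ) * t) = z := by exact_mod_cast hz
    rw [← this]; ring

lemma zs_exp_norm (t : ℝ) : ‖Complex.exp (2 * Real.pi * Complex.I * t)‖ = 1 := by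
  rw [Complex.norm_exp]; simp

/-- roots: `x ^ N = 1` and `x ≠ 1`. -/
lemma zs_root (t : ℝ) (N : ℕ) (hN : 0 < N) :
    (Complex.exp (2 * Real.pi * Complex.I * t) ^ N = 1 ∧
      Complex.exp (2 * Real.pi * Complex.I * t) ≠ 1) ↔
    ∃ z : ℤ, ¬ ((N : ℤ) ∣ z) ∧ t = z / N := by
  have hN' : (N : ℝ) ≠ 0 := by positivity
  have h1 := zs_exp_pow_one t 1
  rw [pow_one] at h1
  rw [zs_exp_pow_one, ne_eq, h1]
  constructor
  · rintro ⟨⟨z, hz⟩, h⟩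
    refine ⟨z, ?_, by field_simp; linarith⟩
    rintro ⟨w, rfl⟩
    apply h
    refine ⟨w, ?_⟩
    push_cast at hz ⊢
    have := mul_left_cancel₀ hN' hz
    simpa using this
  · rintro ⟨z, hz, rfl⟩
    refine ⟨⟨z, by field_simp⟩, ?_⟩
    rintro ⟨w, hw⟩
    apply hz
    refine ⟨w, ?_⟩
    have : (z : ℝ) = N * w := by
      rw [← hw]; push_cast; field_simp
    exact_mod_cast this

lemma zs_mask_T1 (N : ℕ) (hN : 0 < N) (t : ℝ) :
    mask (Finset.range N) t = 0 ↔ ∃ z : ℤ, ¬ ((N : ℤ) ∣ z) ∧ t = z / N := by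
  have hN' : (N : ℂ) ≠ 0 := by exact_mod_cast hN.ne'
  rw [← zs_root t N hN, zs_mask_eq]
  set x := Complex.exp (2 * Real.pi * Complex.I * t)
  rw [Finset.card_range, mul_eq_zero, or_iff_right (inv_ne_zero hN')]
  by_cases hx : x = 1
  · simp [hx, hN.ne']
  · rw [geom_sum_eq hx, div_eq_zero_iff, or_iff_left (sub_ne_zero.2 hx), sub_eq_zero]
    simp [hx]

lemma zs_mask_T2 (a b : ℕ) (ha : 0 < a) (hab : a < b) (hg : Nat.gcd a b = 1)
    (hm : a % 3 = 1 ∧ b % 3 = 2 ∨ a % 3 = 2 ∧ b % 3 = 1) (t : ℝ) :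
    mask ({0, a, b} : Finset ℕ) t = 0 ↔ ∃ z : ℤ, ¬ ((3 : ℤ) ∣ z) ∧ t = z / 3 := by
  have h3 := zs_root t 3 (by norm_num)
  push_cast at h3
  rw [← h3, zs_mask_eq]
  have hn := zs_exp_norm t
  set x := Complex.exp (2 * Real.pi * Complex.I * t)
  have hsum : ∑ d ∈ ({0, a, b} : Finset ℕ), x ^ d = 1 + (x ^ a + x ^ b) := by
    rw [Finset.sum_insert, Finset.sum_insert, Finset.sum_singleton, pow_zero]
    · simp; omega
    · simp; omega
  have hc : ({0, a, b} : Finset ℕ).card = 3 := by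
    rw [Finset.card_eq_three]
    exact ⟨0, a, b, by omega, by omega, by omega, rfl⟩
  rw [hsum, hc, mul_eq_zero, or_iff_right (by norm_num)]
  constructor
  · intro h
    have hxa : ‖x ^ a‖ = 1 := by rw [norm_pow, hn, one_pow]
    have hxb : ‖x ^ b‖ = 1 := by rw [norm_pow, hn, one_pow]
    have hne : x ≠ 1 := by
      intro hx; rw [hx] at h; norm_num at h
    have key : ∀ u v : ℂ, ‖u‖ = 1 → ‖v‖ = 1 → 1 + (u + v) = 0 → u ^ 3 = 1 ∧ v ^ 3 = 1 := by
      intro u v hu hv huv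
      have h1 : u * (starRingEnd ℂ) u = 1 := by rw [Complex.mul_conj, Complex.normSq_eq_norm_sq, hu]; simp
      have h2 : v * (starRingEnd ℂ) v = 1 := by rw [Complex.mul_conj, Complex.normSq_eq_norm_sq, hv]; simp
      have h4 : 1 + ((starRingEnd ℂ) u + (starRingEnd ℂ) v) = 0 := by
        have := congrArg (starRingEnd ℂ) huv
        simpa using this
      set u' := (starRingEnd ℂ) u
      set v' := (starRingEnd ℂ) v
      have h5 : u * v = 1 := by
        linear_combination u * v * h4 - v * h1 - u * h2 - huv
      have hv' : v = -1 - u := by linear_combination huv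
      have h6 : u ^ 2 + u + 1 = 0 := by rw [hv'] at h5; linear_combination -h5
      constructor
      · linear_combination (u - 1) * h6
      · rw [hv']; linear_combination (-u - 2) * h6
    obtain ⟨k1, k2⟩ := key _ _ hxa hxb h
    refine ⟨?_, hne⟩
    rw [← pow_mul] at k1 k2
    have hg3 := pow_gcd_eq_one.2 ⟨k1, k2⟩
    rwa [Nat.gcd_mul_right, hg, one_mul] at hg3
  · rintro ⟨hx3, hx1⟩
    have h6 : x ^ 2 + x + 1 = 0 := by
      apply mul_left_cancel₀ (sub_ne_zero.2 hx1)
      linear_combination hx3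
    have hmod : ∀ k : ℕ, x ^ k = x ^ (k % 3) := fun k => pow_eq_pow_mod k hx3
    rw [hmod a, hmod b]
    rcases hm with ⟨h1, h2⟩ | ⟨h1, h2⟩ <;> rw [h1, h2] <;> linear_combination h6

lemma zs_mask_T3 (d : ℕ) (hd : 0 < d) (t : ℝ) :
    mask ({0, d} : Finset ℕ) t = 0 ↔ ∃ z : ℤ, t = (2 * z + 1) / (2 * d) := by
  have hd' : (d : ℝ) ≠ 0 := by positivity
  have h2 := zs_root (d * t) 2 (by norm_num)
  rw [zs_mask_eq]
  have hp : Complex.exp (2 * Real.pi * Complex.I * t) ^ d =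
      Complex.exp (2 * Real.pi * Complex.I * ((d * t : ℝ) : ℂ)) := by
    rw [← Complex.exp_nat_mul]; congr 1; push_cast; ring
  rw [Finset.sum_pair hd.ne, Finset.card_pair hd.ne, pow_zero, hp, mul_eq_zero,
    or_iff_right (by norm_num)]
  set y := Complex.exp (2 * Real.pi * Complex.I * ((d * t : ℝ) : ℂ))
  have : 1 + y = 0 ↔ y ^ 2 = 1 ∧ y ≠ 1 := by
    constructor
    · intro h
      have hy : y = -1 := by linear_combination h
      rw [hy]; norm_num
    · rintro ⟨h1, h2⟩
      apply mul_left_cancel₀ (sub_ne_zero.2 h2)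
      linear_combination h1
  rw [this, h2]
  constructor
  · rintro ⟨z, hz, h⟩
    obtain ⟨w, hw⟩ : ∃ w, z = 2 * w + 1 := ⟨z / 2, by push_cast at hz; omega⟩
    refine ⟨w, ?_⟩
    rw [hw] at h; push_cast at h
    field_simp at h ⊢
    linarith
  · rintro ⟨z, rfl⟩
    refine ⟨2 * z + 1, by push_cast; omega, ?_⟩
    push_cast; field_simp

lemma zs_FT_charFun (μ : Measure ℝ) (ξ : ℝ) : FT μ ξ = charFun μ (-(2 * Real.pi * ξ)) := by
  rw [charFun_apply_real, FT]
  congr 1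
  ext x
  congr 1
  push_cast
  ring

lemma zs_unif_prob (E : Finset ℕ) (hE : E.Nonempty) (s : ℝ) :
    IsProbabilityMeasure (unifD E s) := by
  constructor
  have : (E.card : ℝ≥0∞) ≠ 0 := by simpa using hE.ne_empty
  simp [unifD, ENNReal.inv_mul_cancel this (ENNReal.natCast_ne_top _)]

lemma zs_FT_unif (E : Finset ℕ) (s ξ : ℝ) :
    FT (unifD E s) ξ = mask E (-(ξ * s)) := by
  unfold FT unifD mask
  rw [integral_smul_measure, integral_finsetSum_measure]
  · simp only [integral_dirac]
    rw [ENNReal.toReal_inv, Complex.real_smul]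
    simp only [ENNReal.toReal_natCast]
    push_cast
    congr 1
    refine Finset.sum_congr rfl fun d _ => ?_
    congr 1
    ring
  · intro i _
    exact integrable_dirac (by simp)

lemma zs_muN_prob (p : ℕ → ℕ) (D : ℕ → Finset ℕ) (hD : ∀ n, 1 ≤ n → (D n).Nonempty) (n : ℕ) :
    IsProbabilityMeasure (muN p D n) := by
  induction n with
  | zero => rw [muN]; infer_instance
  | succ n ih =>
    rw [muN]
    have := zs_unif_prob (D (n + 1)) (hD _ (by omega)) ((Pprod p (n + 1) : ℝ)⁻¹)
    infer_instance

lemma zs_FT_muN (p : ℕ → ℕ) (D : ℕ → Finset ℕ) (hD : ∀ n, 1 ≤ n → (D n).Nonempty) (ξ : ℝ)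
    (n : ℕ) :
    FT (muN p D n) ξ =
      ∏ i ∈ Finset.range n, mask (D (i + 1)) (-(ξ * (Pprod p (i + 1) : ℝ)⁻¹)) := by
  induction n with
  | zero => simp [muN, FT]
  | succ n ih =>
    have := zs_unif_prob (D (n + 1)) (hD _ (by omega)) ((Pprod p (n + 1) : ℝ)⁻¹)
    have := zs_muN_prob p D hD n
    rw [Finset.prod_range_succ, ← ih, ← zs_FT_unif]
    simp only [zs_FT_charFun]
    rw [muN, charFun_conv]

lemma zs_tendsto (p : ℕ → ℕ) (D : ℕ → Finset ℕ) (hD : ∀ n, 1 ≤ n → (D n).Nonempty)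
    (μ : Measure ℝ) (hμ : IsMoran p D μ) (ξ : ℝ) :
    Tendsto (fun n => FT (muN p D n) ξ) atTop (nhds (FT μ ξ)) := by
  obtain ⟨h1, h2⟩ := hμ
  have := (ProbabilityMeasure.tendsto_iff_forall_integral_tendsto
    (μs := fun n => ⟨muN p D n, zs_muN_prob p D hD n⟩) (μ := ⟨μ, h1⟩) (F := atTop)).2 h2
  have := ProbabilityMeasure.tendsto_iff_tendsto_charFun.1 this
  simp only [zs_FT_charFun]
  exact this _

lemma zs_mask_bound (E : Finset ℕ) (hE : E.Nonempty) (M : ℝ) (hM : ∀ d ∈ E, (d : ℝ) ≤ M) (t : ℝ) :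
    ‖mask E t - 1‖ ≤ 2 * Real.pi * M * |t| := by
  have hc : (E.card : ℂ) ≠ 0 := by
    have := hE.card_pos
    exact_mod_cast this.ne'
  have hc' : (0 : ℝ) < E.card := by
    have := hE.card_pos
    exact_mod_cast this
  have h1 : mask E t - 1 = (E.card : ℂ)⁻¹ *
      ∑ d ∈ E, (Complex.exp (Complex.I * ((2 * Real.pi * d * t : ℝ) : ℂ)) - 1) := by
    unfold mask
    rw [Finset.sum_sub_distrib, mul_sub]
    congr 1
    · congr 1
      refine Finset.sum_congr rfl fun d _ => ?_
      congr 1; push_cast; ring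
    · simp [hc]
  rw [h1, norm_mul, norm_inv, Complex.norm_natCast, inv_mul_le_iff₀ hc', ← nsmul_eq_mul]
  refine (norm_sum_le _ _).trans (Finset.sum_le_card_nsmul _ _ _ fun d hd => ?_)
  refine (Real.norm_exp_I_mul_ofReal_sub_one_le).trans ?_
  rw [Real.norm_eq_abs, abs_mul, abs_of_nonneg (by positivity)]
  have := hM d hd
  gcongr

lemma zs_Pprod_succ (p : ℕ → ℕ) (n : ℕ) : Pprod p (n + 1) = Pprod p n * p (n + 1) := by
  unfold Pprod
  rw [Finset.prod_Icc_succ_top (by omega)]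

lemma zs_Pprod_ge (p : ℕ → ℕ) (hp : ∀ n, 1 ≤ n → 1 < p n) (n : ℕ) : 2 ^ n ≤ Pprod p n := by
  induction n with
  | zero => simp [Pprod]
  | succ n ih =>
    rw [zs_Pprod_succ, pow_succ]
    exact Nat.mul_le_mul ih (hp _ (by omega))

lemma zs_FT_zero_iff (p : ℕ → ℕ) (D : ℕ → Finset ℕ) (μ : Measure ℝ)
    (hp : ∀ n, 1 ≤ n → 1 < p n) (hD : ∀ n, 1 ≤ n → (D n).Nonempty)
    (hb : ∀ n, 1 ≤ n → ∀ d ∈ D n, d ≤ p n) (hμ : IsMoran p D μ) (ξ : ℝ) :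
    FT μ ξ = 0 ↔ ∃ n, 1 ≤ n ∧ mask (D n) (-ξ / Pprod p n) = 0 := by
  have ht := zs_tendsto p D hD μ hμ ξ
  simp only [zs_FT_muN p D hD] at ht
  set g : ℕ → ℂ := fun i => mask (D (i + 1)) (-(ξ * (Pprod p (i + 1) : ℝ)⁻¹)) with hg
  have hge : ∀ n, g n = mask (D (n + 1)) (-ξ / Pprod p (n + 1)) := by
    intro n
    simp only [hg]
    congr 1
    rw [neg_div, div_eq_mul_inv]
  have hPpos : ∀ n, (0 : ℝ) < Pprod p n := fun n => by
    have := zs_Pprod_ge p hp n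
    have h2 : 0 < 2 ^ n := by positivity
    exact_mod_cast h2.trans_le this
  have hs : Summable fun n => ‖g n - 1‖ := by
    refine Summable.of_nonneg_of_le (fun _ => norm_nonneg _) (fun n => ?_)
      ((summable_geometric_two).mul_left (2 * Real.pi * |ξ|))
    have h1 := zs_mask_bound (D (n + 1)) (hD _ (by omega)) (p (n + 1))
      (fun d hd => by exact_mod_cast hb (n + 1) (by omega) d hd) (-(ξ * (Pprod p (n + 1) : ℝ)⁻¹))
    refine h1.trans ?_
    have hpp : (0 : ℝ) < p (n + 1) := by
      have := hp (n + 1) (by omega)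
      exact_mod_cast (by omega : 0 < p (n + 1))
    have hP := hPpos n
    have hP2 : (2 : ℝ) ^ n ≤ Pprod p n := by exact_mod_cast zs_Pprod_ge p hp n
    rw [abs_neg, abs_mul, abs_of_pos (inv_pos.2 (hPpos _)), zs_Pprod_succ]
    push_cast
    have : 2 * Real.pi * (p (n + 1) : ℝ) * (|ξ| * ((Pprod p n : ℝ) * (p (n + 1)))⁻¹) =
        2 * Real.pi * |ξ| * (Pprod p n : ℝ)⁻¹ := by field_simp
    rw [this, one_div, inv_pow]
    gcongr
  constructor
  · intro h
    by_contra! hne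
    have hne' : ∀ i, 1 + (g i - 1) ≠ 0 := fun i => by
      rw [add_sub_cancel, hge]
      exact hne (i + 1) (by omega)
    have h1 := tprod_one_add_ne_zero_of_summable hne' hs
    have h2 := (multipliable_one_add_of_summable hs).tendsto_prod_tprod_nat
    simp only [add_sub_cancel] at h1 h2
    exact h1 ((tendsto_nhds_unique h2 ht).trans h)
  · rintro ⟨n, hn, h⟩
    obtain ⟨m, rfl⟩ : ∃ m, n = m + 1 := ⟨n - 1, by omega⟩
    rw [← hge] at h
    refine tendsto_nhds_unique ht (tendsto_const_nhds.congr' ?_)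
    filter_upwards [eventually_gt_atTop m] with k hk
    exact (Finset.prod_eq_zero (Finset.mem_range.2 hk) h).symm

/-- equation (1.7). The zero set of the Fourier transform of the
Moran measure. -/
theorem zero_set_fourier (p : ℕ → ℕ) (D : ℕ → Finset ℕ) (μ : Measure ℝ)
    (hp : ∀ n, 1 ≤ n → 1 < p n) (hT : SatisfiesT p D) (hμ : IsMoran p D μ) :
    {ξ : ℝ | FT μ ξ = 0} =
      (⋃ i ∈ {i : ℕ | 1 ≤ i ∧ (D i).card = 2},
        {x : ℝ | ∃ z : ℤ, x = (Pprod p i : ℝ) * (2 * (z : ℝ) + 1) / (2 * (bOf D i : ℝ))}) ∪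
      (⋃ j ∈ {j : ℕ | 1 ≤ j ∧ (D j).card = 3},
        {x : ℝ | ∃ z : ℤ, ¬ (3 ∣ z) ∧ x = (Pprod p j : ℝ) * (z : ℝ) / 3}) ∪
      (⋃ m ∈ {m : ℕ | 1 ≤ m ∧ 3 < (D m).card},
        {x : ℝ | ∃ z : ℤ, ¬ (((D m).card : ℤ) ∣ z) ∧
          x = (Pprod p m : ℝ) * (z : ℝ) / ((D m).card : ℝ)}) := by
  obtain ⟨hT, c, hc, hT2⟩ := hT
  have hPpos : ∀ n, (0 : ℝ) < Pprod p n := fun n => by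
    have := zs_Pprod_ge p hp n
    have h2 : 0 < 2 ^ n := by positivity
    exact_mod_cast h2.trans_le this
  have hD : ∀ n, 1 ≤ n → (D n).Nonempty := by
    intro n hn
    rcases hT n hn with ⟨N, h1, _, _, h⟩ | ⟨a, b, _, _, _, _, _, h⟩ | ⟨d, _, _, _, h⟩ <;> rw [h]
    · exact ⟨0, by simp; omega⟩
    · exact ⟨0, by simp⟩
    · exact ⟨0, by simp⟩
  have hb : ∀ n, 1 ≤ n → ∀ d ∈ D n, d ≤ p n := by
    intro n hn d hd
    rcases hT n hn with ⟨N, h1, _, _, h⟩ | h2 | ⟨e, _, _, _, h⟩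
    · rw [h] at hd; simp at hd; omega
    · have h3 := hT2 n hn h2
      have hpp : (0 : ℝ) < p n := by
        have := hp n hn
        exact_mod_cast (by omega : 0 < p n)
      have h4 : ((D n).sup id : ℕ) ≤ p n := by
        rw [div_le_iff₀ hpp] at h3
        have : (((D n).sup id : ℕ) : ℝ) ≤ p n := by nlinarith
        exact_mod_cast this
      exact (Finset.le_sup (f := id) hd).trans h4
    · rw [h] at hd; simp at hd; omega
  have hneg : ∀ (n : ℕ) (x y : ℝ), -x / Pprod p n = y ↔ x = Pprod p n * (-y) := by
    intro n x y
    have := hPpos n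
    rw [div_eq_iff this.ne']
    constructor <;> intro h <;> linarith
  ext ξ
  rw [Set.mem_ofPred_eq, zs_FT_zero_iff p D μ hp hD hb hμ]
  simp only [Set.mem_union, Set.mem_iUnion, Set.mem_ofPred_eq, exists_prop]
  rw [← exists_or, ← exists_or]
  refine exists_congr fun n => ?_
  by_cases hn : 1 ≤ n
  swap
  · simp [hn]
  simp only [hn, true_and]
  rcases hT n hn with ⟨N, h1, _, _, h⟩ | ⟨a, b, ha, hab, hg, hm, _, h⟩ | ⟨d, hd, _, _, h⟩
  · have hcard : (D n).card = N := by rw [h, Finset.card_range]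
    have e2 : N ≠ 2 := by omega
    have e3 : N ≠ 3 := by omega
    rw [hcard, h, zs_mask_T1 N (by omega)]
    simp only [e2, e3, h1, false_and, false_or, true_and, hneg]
    constructor
    · rintro ⟨z, hz, hx⟩
      refine ⟨-z, by simpa using hz, ?_⟩
      rw [hx]; push_cast; ring
    · rintro ⟨z, hz, hx⟩
      refine ⟨-z, by simpa using hz, ?_⟩
      rw [hx]; push_cast; ring
  · have hcard : (D n).card = 3 := by
      rw [h, Finset.card_eq_three]
      exact ⟨0, a, b, by omega, by omega, by omega, rfl⟩
    rw [hcard, h, zs_mask_T2 a b ha hab hg hm]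
    simp only [hneg]
    norm_num
    constructor
    · rintro ⟨z, hz, hx⟩
      refine ⟨-z, by simpa using hz, ?_⟩
      rw [hx]; push_cast; ring
    · rintro ⟨z, hz, hx⟩
      refine ⟨-z, by simpa using hz, ?_⟩
      rw [hx]; push_cast; ring
  · have hcard : (D n).card = 2 := by rw [h, Finset.card_pair hd.ne]
    have hbo : bOf D n = d := by simp [bOf, h]
    rw [hcard, hbo, h, zs_mask_T3 d hd]
    simp only [hneg]
    norm_num
    constructor
    · rintro ⟨z, hx⟩
      refine ⟨-z - 1, ?_⟩
      rw [hx]; push_cast; ring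
    · rintro ⟨z, hx⟩
      refine ⟨-z - 1, ?_⟩
      rw [hx]; push_cast; ring

end
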